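/- Let m ≥ 1 and δ ≥ 0. There exists a constant c₁ = c₁(δ) > 0 such that for every μ ≥ 0 and all ξ, η ∈ ℝ^m: c₁ ⟨V_δ(ξ) − V_δ(η), ξ − η⟩ ≥ |ξ − η|² (μ² + |ξ|² + |η|²)^{δ/2}, where V_δ(ξ) := (μ² + |ξ|²)^{δ/2} ξ and ⟨·,·⟩ is the Euclidean inner product on ℝ^m. -/

import Mathlib

/-- For `δ ≥ 0` there is `c₁ = c₁(δ) > 0` such that, with `V_δ(ξ) = (μ² + |ξ|²)^{δ/2} ξ`,
`c₁ ⟨V_δ(ξ) - V_δ(η), ξ - η⟩ ≥ |ξ - η|² (μ² + |ξ|² + |η|²)^{δ/2}` for all `ξ, η ∈ ℝ^m`. -/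
theorem Vdelta_monotonicity (m : ℕ) (hm : 1 ≤ m) (δ : ℝ) (hδ : 0 ≤ δ) :
    ∃ c₁ > (0 : ℝ),
      ∀ μ : ℝ, 0 ≤ μ → ∀ ξ η : EuclideanSpace ℝ (Fin m),
        ‖ξ - η‖ ^ 2 * (μ ^ 2 + ‖ξ‖ ^ 2 + ‖η‖ ^ 2) ^ (δ / 2) ≤
          c₁ * (inner ℝ ((μ ^ 2 + ‖ξ‖ ^ 2) ^ (δ / 2) • ξ - (μ ^ 2 + ‖η‖ ^ 2) ^ (δ / 2) • η)
            (ξ - η) : ℝ) := by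
  refine ⟨2 * 2 ^ (δ / 2), by positivity, ?_⟩
  intro μ hμ ξ η
  have hd : 0 ≤ δ / 2 := by positivity
  have hA : 0 ≤ μ ^ 2 + ‖ξ‖ ^ 2 := by positivity
  have hB : 0 ≤ μ ^ 2 + ‖η‖ ^ 2 := by positivity
  have hC : 0 ≤ μ ^ 2 + ‖ξ‖ ^ 2 + ‖η‖ ^ 2 := by positivity
  have ha := Real.rpow_nonneg hA (δ / 2)
  have hb := Real.rpow_nonneg hB (δ / 2)
  have hk : (0 : ℝ) < 2 ^ (δ / 2) := by positivity
  have hbound : (μ ^ 2 + ‖ξ‖ ^ 2 + ‖η‖ ^ 2) ^ (δ / 2) ≤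
      2 ^ (δ / 2) * ((μ ^ 2 + ‖ξ‖ ^ 2) ^ (δ / 2) + (μ ^ 2 + ‖η‖ ^ 2) ^ (δ / 2)) := by
    rcases le_total (‖ξ‖ ^ 2) (‖η‖ ^ 2) with h | h
    · have h1 := Real.rpow_le_rpow hC
        (show _ ≤ 2 * (μ ^ 2 + ‖η‖ ^ 2) by nlinarith [sq_nonneg μ]) hd
      rw [Real.mul_rpow (by norm_num) hB] at h1
      nlinarith [mul_nonneg hk.le ha]
    · have h1 := Real.rpow_le_rpow hC
        (show _ ≤ 2 * (μ ^ 2 + ‖ξ‖ ^ 2) by nlinarith [sq_nonneg μ]) hd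
      rw [Real.mul_rpow (by norm_num) hA] at h1
      nlinarith [mul_nonneg hk.le hb]
  have hmono : 0 ≤ ((μ ^ 2 + ‖ξ‖ ^ 2) ^ (δ / 2) - (μ ^ 2 + ‖η‖ ^ 2) ^ (δ / 2)) *
      (‖ξ‖ ^ 2 - ‖η‖ ^ 2) := by
    rcases le_total (‖ξ‖ ^ 2) (‖η‖ ^ 2) with h | h
    · have h1 := Real.rpow_le_rpow hA
        (show _ ≤ μ ^ 2 + ‖η‖ ^ 2 by linarith) hd
      exact mul_nonneg_of_nonpos_of_nonpos (by linarith) (by linarith)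
    · have h1 := Real.rpow_le_rpow hB
        (show _ ≤ μ ^ 2 + ‖ξ‖ ^ 2 by linarith) hd
      exact mul_nonneg (by linarith) (by linarith)
  generalize (μ ^ 2 + ‖ξ‖ ^ 2) ^ (δ / 2) = a at *
  generalize (μ ^ 2 + ‖η‖ ^ 2) ^ (δ / 2) = b at *
  have hn := norm_sub_sq_real ξ η
  have hin : 2 * (inner ℝ (a • ξ - b • η) (ξ - η) : ℝ) =
      (a + b) * ‖ξ - η‖ ^ 2 + (a - b) * (‖ξ‖ ^ 2 - ‖η‖ ^ 2) := by
    rw [hn]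
    simp only [inner_sub_left, inner_sub_right, real_inner_smul_left,
      real_inner_self_eq_norm_sq, real_inner_comm ξ η]
    ring
  calc _ ≤ ‖ξ - η‖ ^ 2 * (2 ^ (δ / 2) * (a + b)) :=
        mul_le_mul_of_nonneg_left hbound (by positivity)
    _ ≤ 2 ^ (δ / 2) * ((a + b) * ‖ξ - η‖ ^ 2 + (a - b) * (‖ξ‖ ^ 2 - ‖η‖ ^ 2)) := by
        nlinarith [mul_nonneg hk.le hmono]
    _ = _ := by rw [← hin]; ring
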